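/- Let k be an algebraically closed field, let V and V' be integral projective k-varieties with V normal, and let φ : V' → V be a finite surjective morphism. Let d denote the separable degree of the function field extension k(V) ↪ k(V') induced by φ. Then there exists a nonempty (hence dense) Zariski-open subset U₀ of V such that for every closed point x of U₀, the fiber φ⁻¹(x) contains exactly d points. -/

import Mathlib

open AlgebraicGeometry CategoryTheory

universe u

/-- Projective `n`-space over `k`, realized as `Proj k[X₀, …, Xₙ]`. -/
noncomputable def ProjectiveSpace (k : Type u) [Field k] (n : ℕ) : Scheme.{u} :=
  letI := MvPolynomial.gradedAlgebra (σ := Fin (n + 1)) (R := k)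
  AlgebraicGeometry.Proj (MvPolynomial.homogeneousSubmodule (Fin (n + 1)) k)

/-- A scheme `V` with structure morphism `sV` to `Spec k` is projective over `k` if it admits a
closed immersion into some projective space over `k`, compatibly with the structure morphisms. -/
def IsProjectiveOver {k : Type u} [Field k] (V : Scheme.{u})
    (sV : V ⟶ Spec (CommRingCat.of k)) : Prop :=
  ∃ (n : ℕ) (ι : V ⟶ ProjectiveSpace k n) (p : ProjectiveSpace k n ⟶ Spec (CommRingCat.of k)),
    IsClosedImmersion ι ∧ ι ≫ p = sV

/-!
Over an affine open of `V` the morphism is a finite injective extension `A ⊆ B` of domains with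
fraction fields `K ⊆ L`. Choose `b : B` generating the separable closure of `K` in `L` and scaled so
that its minimal polynomial over `K` has a monic model `g` over `A`; then `deg g` is the separable
degree. For an algebraically closed field `F` over `A`, evaluation at `b` maps `B →ₐ[A] F` to the
roots of `g` in `F`. Every root is attained, by lying over. Away from a hypersurface of `Spec A`,
`g` stays separable over `F`, and `ψ b` determines `ψ`: a `q`-power of each module generator of `B`
is, up to a denominator, a polynomial in `b`, and Frobenius is injective on `F`. When `F` is the
residue field of a point of `Spec A`, the homomorphisms `B →ₐ[A] F` are the points of the fiber.
-/

open Polynomial IntermediateField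
open scoped nonZeroDivisors

universe v

section FractionField

variable {A K : Type*} [CommRing A] [IsDomain A] [Field K] [Algebra A K] [IsFractionRing A K]

theorem exists_map_eq_C_mul (p : K[X]) :
    ∃ a : A, a ≠ 0 ∧ ∃ q : A[X], q.map (algebraMap A K) = C (algebraMap A K a) * p := by
  obtain ⟨a, ha, h⟩ := IsLocalization.integerNormalization_spec A⁰ p
  exact ⟨a, nonZeroDivisors.ne_zero ha, _, by rw [h, ← algebraMap_smul K a p, smul_eq_C_mul]⟩

theorem exists_monic_map_eq_scaleRoots {p : K[X]} (hp : p.Monic) :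
    ∃ a : A, a ≠ 0 ∧ ∃ g : A[X], g.Monic ∧
      g.map (algebraMap A K) = p.scaleRoots (algebraMap A K a) := by
  obtain ⟨a, ha, q, hq⟩ := exists_map_eq_C_mul (A := A) p
  have hinj : Function.Injective (algebraMap A K) := IsFractionRing.injective A K
  have ha' : algebraMap A K a ≠ 0 := (map_ne_zero_iff _ hinj).2 ha
  have hlc : q.leadingCoeff = a := hinj <| by
    rw [← leadingCoeff_map_of_injective hinj, hq, leadingCoeff_mul, leadingCoeff_C,
      hp.leadingCoeff, mul_one]
  have hq0 : q ≠ 0 := leadingCoeff_ne_zero.1 (hlc ▸ ha)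
  refine ⟨a, ha, q.integralNormalization, monic_integralNormalization hq0, ?_⟩
  refine mul_right_cancel₀ (C_ne_zero.2 ha') ?_
  calc q.integralNormalization.map (algebraMap A K) * C (algebraMap A K a)
      = (q.scaleRoots a).map (algebraMap A K) := by
        rw [← map_C, ← Polynomial.map_mul, ← hlc, integralNormalization_mul_C_leadingCoeff]
    _ = (C (algebraMap A K a) * p).scaleRoots (algebraMap A K a) := by
        rw [map_scaleRoots _ _ _ (by rwa [hlc]), hq]
    _ = p.scaleRoots (algebraMap A K a) * C (algebraMap A K a) := by
        rw [mul_scaleRoots_of_noZeroDivisors, scaleRoots_C, mul_comm]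

theorem exists_bezout_derivative_of_separable_map {g : A[X]}
    (hg : (g.map (algebraMap A K)).Separable) :
    ∃ c : A, c ≠ 0 ∧ ∃ u v : A[X], u * g + v * derivative g = C c := by
  obtain ⟨u, v, h⟩ := hg
  obtain ⟨a, ha, u', hu⟩ := exists_map_eq_C_mul (A := A) u
  obtain ⟨b, hb, v', hv⟩ := exists_map_eq_C_mul (A := A) v
  refine ⟨a * b, mul_ne_zero ha hb, C b * u', C a * v', ?_⟩
  apply Polynomial.map_injective _ (IsFractionRing.injective A K)
  simp only [Polynomial.map_add, Polynomial.map_mul, map_C, hu, hv, map_mul]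
  rw [derivative_map] at h
  linear_combination (C (algebraMap A K a) * C (algebraMap A K b)) * h

theorem exists_forall_separable_map {g : A[X]} (hg : (g.map (algebraMap A K)).Separable) :
    ∃ c : A, c ≠ 0 ∧ ∀ (F : Type v) [Field F] [Algebra A F], algebraMap A F c ≠ 0 →
      (g.map (algebraMap A F)).Separable := by
  obtain ⟨c, hc, u, v, huv⟩ := exists_bezout_derivative_of_separable_map hg
  refine ⟨c, hc, fun F _ _ hcF ↦ ⟨C (algebraMap A F c)⁻¹ * u.map (algebraMap A F),
    C (algebraMap A F c)⁻¹ * v.map (algebraMap A F), ?_⟩⟩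
  have huvF := congrArg (Polynomial.map (algebraMap A F)) huv
  simp only [Polynomial.map_add, Polynomial.map_mul, map_C] at huvF
  rw [derivative_map, mul_assoc, mul_assoc, ← mul_add, huvF, ← C_mul, inv_mul_cancel₀ hcF, C_1]

end FractionField

theorem adjoin_simple_smul_eq {K L : Type*} [Field K] [Field L] [Algebra K L] {a : K}
    (ha : a ≠ 0) (x : L) : K⟮a • x⟯ = K⟮x⟯ := by
  refine le_antisymm ?_ ?_ <;> rw [adjoin_simple_le_iff]
  · exact K⟮x⟯.smul_mem (mem_adjoin_simple_self K x)
  · simpa only [inv_smul_smul₀ ha] using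
      K⟮a • x⟯.smul_mem (x := a⁻¹) (mem_adjoin_simple_self K (a • x))

theorem injective_pow_expChar_pow (A F : Type*) [CommRing A] [Field F] [Algebra A F]
    (q n : ℕ) [hq : ExpChar A q] : Function.Injective (fun x : F ↦ x ^ q ^ n) := by
  cases hq with
  | zero => simp [Function.Injective]
  | prime hp =>
    have : Fact q.Prime := ⟨hp⟩
    have hqF : (q : F) = 0 := by rw [← map_natCast (algebraMap A F), CharP.cast_eq_zero, map_zero]
    have : CharP F q := (CharP.charP_iff_prime_eq_zero hp).2 hqF
    exact iterateFrobenius_inj F q n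

section Extension

variable {R S F : Type*} [CommRing R] [CommRing S] [Algebra R S] [Algebra.IsIntegral R S]
  [Field F] [IsAlgClosed F] [Algebra R F]

theorem nonempty_algHom_of_ker_le
    (h : RingHom.ker (algebraMap R S) ≤ RingHom.ker (algebraMap R F)) :
    Nonempty (S →ₐ[R] F) := by
  set P := RingHom.ker (algebraMap R F)
  have : P.IsPrime := RingHom.ker_isPrime _
  obtain ⟨Q, -, hQ, hQP⟩ := Ideal.exists_ideal_over_prime_of_isIntegral P (⊥ : Ideal S) h
  have : Q.LiesOver P := ⟨hQP.symm⟩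
  let : Algebra (R ⧸ P) F := (Ideal.Quotient.lift P (algebraMap R F) fun _ ↦ id).toAlgebra
  have : IsScalarTower R (R ⧸ P) F := .of_algebraMap_eq fun _ ↦ rfl
  have : FaithfulSMul (R ⧸ P) F :=
    (faithfulSMul_iff_algebraMap_injective _ _).2 (RingHom.kerLift_injective (algebraMap R F))
  have : Algebra.IsIntegral (R ⧸ P) (S ⧸ Q) := .tower_top R
  have : Module.IsTorsionFree (R ⧸ P) (S ⧸ Q) := FaithfulSMul.to_isTorsionFree _ _
  let ψ : S ⧸ Q →ₐ[R ⧸ P] F := IsAlgClosed.lift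
  exact ⟨(ψ.restrictScalars R).comp (Ideal.Quotient.mkₐ R Q)⟩

theorem exists_algHom_apply_eq {b : S} {r : F}
    (h : ∀ p : R[X], aeval b p = 0 → aeval r p = 0) : ∃ ψ : S →ₐ[R] F, ψ b = r := by
  -- Regard `S` and `F` as `R[X]`-algebras, `X` acting as `b` and as `r`.
  let : Algebra R[X] S := (aeval b).toAlgebra
  let : Algebra R[X] F := (aeval r).toAlgebra
  have : IsScalarTower R R[X] S := .of_algebraMap_eq fun a ↦ (aeval_C b a).symm
  have : IsScalarTower R R[X] F := .of_algebraMap_eq fun a ↦ (aeval_C r a).symm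
  have : Algebra.IsIntegral R[X] S := .tower_top R
  obtain ⟨ψ⟩ := nonempty_algHom_of_ker_le (R := R[X]) (S := S) (F := F) h
  refine ⟨ψ.restrictScalars R, ?_⟩
  calc ψ b = ψ (algebraMap R[X] S X) := congrArg ψ (aeval_X b).symm
    _ = r := (ψ.commutes X).trans (aeval_X r)

theorem exists_algHom_apply_eq_of_aeval_eq_zero {K L : Type*} [Field K] [Algebra R K]
    [FaithfulSMul R K] [CommRing L] [Algebra S L] [Algebra K L] [Algebra R L]
    [IsScalarTower R K L] [IsScalarTower R S L] {b : S} {g : R[X]} (hg : g.Monic)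
    (hgb : g.map (algebraMap R K) = minpoly K (algebraMap S L b)) {r : F} (hr : aeval r g = 0) :
    ∃ ψ : S →ₐ[R] F, ψ b = r := by
  refine exists_algHom_apply_eq fun p hp ↦ ?_
  suffices hdvd : g ∣ p from aeval_eq_zero_of_dvd_aeval_eq_zero hdvd hr
  rw [← map_dvd_map _ (FaithfulSMul.algebraMap_injective R K) hg, hgb]
  refine minpoly.dvd K _ ?_
  rw [aeval_map_algebraMap, aeval_algebraMap_apply, hp, map_zero]

end Extension

section FiniteExtension

variable (A B K L : Type*) [CommRing A] [IsDomain A] [CommRing B] [IsDomain B] [Algebra A B]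
  [Module.Finite A B] [FaithfulSMul A B] [Field K] [Algebra A K] [IsFractionRing A K]
  [Field L] [Algebra B L] [IsFractionRing B L] [Algebra K L] [Algebra A L]
  [IsScalarTower A K L] [IsScalarTower A B L]

theorem exists_adjoin_simple_eq_separableClosure :
    ∃ (b : B) (g : A[X]), g.Monic ∧ g.map (algebraMap A K) = minpoly K (algebraMap B L b) ∧
      K⟮algebraMap B L b⟯ = separableClosure K L := by
  let ι : B →ₗ[A] L := (IsScalarTower.toAlgHom A B L).toLinearMap
  have : Module.Finite K L := .of_isLocalizedModule A⁰ ι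
  obtain ⟨α, hα⟩ := Field.exists_primitive_element K (separableClosure K L)
  have hαL : K⟮(α : L)⟯ = separableClosure K L := by
    rw [← lift_adjoin_simple, hα, lift_top]
  obtain ⟨⟨b, a⟩, hb⟩ := IsLocalizedModule.surj A⁰ ι (α : L)
  have ha : algebraMap A K a ≠ 0 := by simp
  replace hb : algebraMap A K a • (α : L) = algebraMap B L b := (algebraMap_smul K _ _).trans hb
  have hint : IsIntegral K (algebraMap B L b) := Algebra.IsIntegral.isIntegral _
  obtain ⟨c, hc, g, hg, hgmap⟩ := exists_monic_map_eq_scaleRoots (A := A) (minpoly.monic hint)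
  have hc' : algebraMap A K c ≠ 0 := by simpa using hc
  have hcb : algebraMap B L (c • b) = algebraMap A K c • algebraMap B L b :=
    (map_smul ι c b).trans (algebraMap_smul K _ _).symm
  refine ⟨c • b, g, hg, ?_, ?_⟩
  · rw [hgmap, hcb, IsIntegrallyClosed.minpoly_smul hc' hint]
  · rw [hcb, adjoin_simple_smul_eq hc', ← hb, adjoin_simple_smul_eq ha, hαL]

variable {A B K L}

theorem exists_smul_pow_eq_aeval {b : B} (hb : K⟮algebraMap B L b⟯ = separableClosure K L)
    (q : ℕ) [ExpChar K q] (x : B) :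
    ∃ (n : ℕ) (c : A) (p : A[X]), c ≠ 0 ∧ c • x ^ q ^ n = aeval b p := by
  have : Module.Finite K L :=
    .of_isLocalizedModule A⁰ (IsScalarTower.toAlgHom A B L).toLinearMap
  obtain ⟨n, y, hy⟩ := IsPurelyInseparable.pow_mem (separableClosure K L) q (algebraMap B L x)
  have hyb : (y : L) ∈ K⟮algebraMap B L b⟯.toSubalgebra := hb.symm ▸ y.2
  rw [adjoin_simple_toSubalgebra_of_isAlgebraic (Algebra.IsAlgebraic.isAlgebraic _)] at hyb
  obtain ⟨p, hp : aeval _ p = _⟩ := Algebra.adjoin_mem_exists_aeval _ _ hyb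
  obtain ⟨c, hc, p', hp'⟩ := exists_map_eq_C_mul (A := A) p
  refine ⟨n, c, p', hc, IsFractionRing.injective B L ?_⟩
  calc algebraMap B L (c • x ^ q ^ n) = algebraMap A L c * algebraMap B L x ^ q ^ n := by
        rw [Algebra.smul_def, map_mul, map_pow, ← IsScalarTower.algebraMap_apply A B L]
    _ = aeval (algebraMap B L b) (C (algebraMap A K c) * p) := by
        rw [map_mul, aeval_C, ← IsScalarTower.algebraMap_apply A K L, hp, ← hy]; rfl
    _ = algebraMap B L (aeval b p') := by
        rw [← hp', aeval_map_algebraMap, aeval_algebraMap_apply]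

theorem exists_forall_injective_algHom_apply {b : B}
    (hb : K⟮algebraMap B L b⟯ = separableClosure K L) :
    ∃ c : A, c ≠ 0 ∧ ∀ (F : Type v) [Field F] [Algebra A F], algebraMap A F c ≠ 0 →
      Function.Injective fun ψ : B →ₐ[A] F ↦ ψ b := by
  obtain ⟨q, hq⟩ := ExpChar.exists K
  have : ExpChar A q := (algebraMap A K).expChar (IsFractionRing.injective A K) q
  choose n c p hc hp using exists_smul_pow_eq_aeval (A := A) hb q
  obtain ⟨s, hs⟩ := Module.Finite.fg_top (R := A) (M := B)
  refine ⟨∏ x ∈ s, c x, Finset.prod_ne_zero_iff.2 fun x _ ↦ hc x, ?_⟩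
  intro F _ _ hcF ψ₁ ψ₂ (hψ : ψ₁ b = ψ₂ b)
  rw [map_prod, Finset.prod_ne_zero_iff] at hcF
  refine AlgHom.toLinearMap_injective (LinearMap.ext_on hs fun x hx ↦ ?_)
  refine injective_pow_expChar_pow A F q (n x) (mul_left_cancel₀ (hcF x hx) ?_)
  have hpow (ψ : B →ₐ[A] F) : algebraMap A F (c x) * ψ x ^ q ^ n x = aeval (ψ b) (p x) := by
    rw [← Algebra.smul_def, ← map_pow, ← map_smul, hp, aeval_algHom_apply]
  exact (hpow ψ₁).trans (hψ ▸ (hpow ψ₂).symm)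

variable (A B K L)

theorem exists_forall_card_algHom_eq_finSepDegree :
    ∃ f : A, f ≠ 0 ∧ ∀ (F : Type v) [Field F] [IsAlgClosed F] [Algebra A F],
      algebraMap A F f ≠ 0 → Nat.card (B →ₐ[A] F) = Field.finSepDegree K L := by
  have : Module.Finite K L :=
    .of_isLocalizedModule A⁰ (IsScalarTower.toAlgHom A B L).toLinearMap
  obtain ⟨b, g, hg, hgb, hb⟩ := exists_adjoin_simple_eq_separableClosure A B K L
  have hbK : IsIntegral K (algebraMap B L b) := Algebra.IsIntegral.isIntegral _
  have hgdeg : g.natDegree = Field.finSepDegree K L := by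
    rw [← hg.natDegree_map (algebraMap A K), hgb, ← adjoin.finrank hbK, hb, Field.finSepDegree_eq]
    rfl
  have hgsep : (g.map (algebraMap A K)).Separable := by
    rw [hgb]
    exact mem_separableClosure_iff.1 (hb ▸ mem_adjoin_simple_self K _)
  have hgb0 : aeval b g = 0 := IsFractionRing.injective B L <| by
    rw [← aeval_algebraMap_apply, ← aeval_map_algebraMap K, hgb, minpoly.aeval, map_zero]
  obtain ⟨c₁, hc₁, hsep⟩ := exists_forall_separable_map.{v} hgsep
  obtain ⟨c₂, hc₂, hinj⟩ := exists_forall_injective_algHom_apply.{v} (A := A) hb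
  refine ⟨c₁ * c₂, mul_ne_zero hc₁ hc₂, fun F _ _ _ hF ↦ ?_⟩
  rw [map_mul, mul_ne_zero_iff] at hF
  let evalAt : (B →ₐ[A] F) → (g.map (algebraMap A F)).rootSet F := fun ψ ↦ ⟨ψ b, by
    rw [(hg.map _).mem_rootSet, aeval_map_algebraMap, aeval_algHom_apply, hgb0, map_zero]⟩
  have hbij : Function.Bijective evalAt := by
    refine ⟨fun ψ₁ ψ₂ h ↦ hinj F hF.2 (congrArg Subtype.val h), fun ⟨r, hr⟩ ↦ ?_⟩
    rw [(hg.map _).mem_rootSet, aeval_map_algebraMap] at hr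
    obtain ⟨ψ, hψ⟩ := exists_algHom_apply_eq_of_aeval_eq_zero hg hgb hr
    exact ⟨ψ, Subtype.ext hψ⟩
  rw [Nat.card_eq_of_bijective _ hbij, Nat.card_eq_fintype_card,
    card_rootSet_eq_natDegree (hsep F hF.1) (IsAlgClosed.splits _), hg.natDegree_map, hgdeg]

end FiniteExtension

theorem bijective_algHom_ker {F R : Type*} [Field F] [IsAlgClosed F] [CommRing R] [Algebra F R]
    [Algebra.IsIntegral F R] :
    Function.Bijective fun ψ : R →ₐ[F] F ↦
      (⟨RingHom.ker ψ, RingHom.ker_isPrime ψ⟩ : PrimeSpectrum R) := by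
  constructor
  · intro ψ₁ ψ₂ h
    have hker : RingHom.ker ψ₁ = RingHom.ker ψ₂ := congrArg PrimeSpectrum.asIdeal h
    ext x
    have hx : x - algebraMap F R (ψ₁ x) ∈ RingHom.ker ψ₁ := by simp [RingHom.mem_ker]
    rw [hker, RingHom.mem_ker, map_sub, AlgHom.commutes, sub_eq_zero] at hx
    exact hx.symm
  · intro Q
    let e : F ≃ₐ[F] R ⧸ Q.asIdeal := .ofBijective (Algebra.ofId F _)
      IsAlgClosed.algebraMap_bijective_of_isIntegral
    refine ⟨e.symm.toAlgHom.comp (Ideal.Quotient.mkₐ F Q.asIdeal), PrimeSpectrum.ext ?_⟩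
    ext x
    simp [RingHom.mem_ker, Ideal.Quotient.eq_zero_iff_mem]

theorem card_preimage_comap_eq_card_algHom (A B : Type*) [CommRing A] [CommRing B] [Algebra A B]
    [Algebra.IsIntegral A B] (p : PrimeSpectrum A) [IsAlgClosed p.asIdeal.ResidueField] :
    Nat.card (PrimeSpectrum.comap (algebraMap A B) ⁻¹' {p}) =
      Nat.card (B →ₐ[A] p.asIdeal.ResidueField) :=
  calc Nat.card (PrimeSpectrum.comap (algebraMap A B) ⁻¹' {p})
      = Nat.card (PrimeSpectrum (p.asIdeal.Fiber B)) :=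
        Nat.card_congr (PrimeSpectrum.preimageEquivFiber A B p)
    _ = Nat.card (p.asIdeal.Fiber B →ₐ[p.asIdeal.ResidueField] p.asIdeal.ResidueField) :=
        (Nat.card_eq_of_bijective _ bijective_algHom_ker).symm
    _ = Nat.card (B →ₐ[A] p.asIdeal.ResidueField) :=
        (Nat.card_congr (AlgHom.liftEquiv A p.asIdeal.ResidueField B p.asIdeal.ResidueField)).symm

section Scheme

variable {V V' : Scheme.{u}}

theorem germ_comp_eqToHom {U : V.Opens} {x y : V} (hxy : x = y) (hy : y ∈ U) :
    V.presheaf.germ U y hy ≫ eqToHom (by rw [hxy]) = V.presheaf.germ U x (hxy ▸ hy) := by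
  subst hxy
  simp

section FunctionField

variable [IrreducibleSpace V] [IrreducibleSpace V'] (φ : V' ⟶ V) [IsDominant φ]

theorem map_genericPoint : φ (genericPoint V') = genericPoint V := by
  refine ((genericPoint_spec V).eq ?_).symm
  simpa [IsGenericPoint, φ.denseRange.closure_range] using
    (genericPoint_spec V').image φ.continuous

/-- The map of function fields `k(V) ⟶ k(V')` induced by a dominant morphism `φ : V' ⟶ V`: the
stalk map at the generic point of `V'`, whose source is the stalk of `V` at `φ (genericPoint V')`
and is identified with `k(V)` by `map_genericPoint`. -/
noncomputable def functionFieldMap : V.functionField ⟶ V'.functionField :=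
  eqToHom (by rw [map_genericPoint φ]) ≫ φ.stalkMap (genericPoint V')

theorem germToFunctionField_comp_functionFieldMap (U : V.Opens) [Nonempty U]
    [Nonempty (φ ⁻¹ᵁ U)] :
    V.germToFunctionField U ≫ functionFieldMap φ = φ.app U ≫ V'.germToFunctionField (φ ⁻¹ᵁ U) := by
  have hmem : genericPoint V' ∈ φ ⁻¹ᵁ U :=
    ((genericPoint_spec V').mem_open_set_iff (φ ⁻¹ᵁ U).isOpen).2 <| by
      rw [Set.univ_inter]; exact Set.nonempty_coe_sort.1 ‹_›
  calc V.germToFunctionField U ≫ functionFieldMap φ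
      = V.presheaf.germ U (φ (genericPoint V')) hmem ≫ φ.stalkMap (genericPoint V') := by
        rw [← germ_comp_eqToHom (map_genericPoint φ), Category.assoc]; rfl
    _ = φ.app U ≫ V'.germToFunctionField (φ ⁻¹ᵁ U) := φ.germ_stalkMap U _ _

end FunctionField

theorem preimage_fromSpec_singleton (φ : V' ⟶ V) {U : V.Opens} (hU : IsAffineOpen U)
    (hU' : IsAffineOpen (φ ⁻¹ᵁ U)) (y : Spec Γ(V, U)) :
    φ ⁻¹' {hU.fromSpec y} = hU'.fromSpec '' (PrimeSpectrum.comap (φ.app U).hom ⁻¹' {y}) := by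
  have hcomm (z : Spec Γ(V', φ ⁻¹ᵁ U)) :
      φ (hU'.fromSpec z) = hU.fromSpec (PrimeSpectrum.comap (φ.app U).hom z) := by
    have := hU.SpecMap_appLE_fromSpec φ hU' le_rfl
    rw [← Scheme.Hom.app_eq_appLE] at this
    exact congrArg (fun f : Spec _ ⟶ V ↦ f z) this.symm
  ext w
  constructor
  · intro (hw : φ w = hU.fromSpec y)
    have hwU : w ∈ Set.range hU'.fromSpec := by
      rw [hU'.range_fromSpec]
      change φ w ∈ (U : Set V)
      rw [hw, ← hU.range_fromSpec]
      exact Set.mem_range_self y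
    obtain ⟨z, rfl⟩ := hwU
    exact ⟨z, hU.fromSpec.injective ((hcomm z).symm.trans hw), rfl⟩
  · rintro ⟨z, rfl, rfl⟩
    exact hcomm z

theorem isAlgClosed_residueField_of_isAffineOpen {U : V.Opens} (hU : IsAffineOpen U)
    (y : PrimeSpectrum Γ(V, U)) [IsAlgClosed (V.residueField (hU.fromSpec y))] :
    IsAlgClosed y.asIdeal.ResidueField :=
  let x : Spec Γ(V, U) := y
  IsAlgClosed.of_ringEquiv _ _ (asIso (hU.fromSpec.residueFieldMap x) ≪≫
    Scheme.Spec.residueFieldIso Γ(V, U) x).commRingCatIsoToRingEquiv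

theorem isAlgClosed_residueField_of_isClosed {k : Type u} [Field k] [IsAlgClosed k]
    (s : V ⟶ Spec (.of k)) [LocallyOfFiniteType s] {x : V} (hx : IsClosed {x}) :
    IsAlgClosed (V.residueField x) :=
  IsAlgClosed.of_ringEquiv k _ (residueFieldIsoBase s x hx).symm.commRingCatIsoToRingEquiv

theorem exists_forall_card_preimage_comap_eq_finSepDegree [IsIntegral V] [IsIntegral V']
    (φ : V' ⟶ V) [IsFinite φ] [IsDominant φ] {U : V.Opens} (hU : IsAffineOpen U) [Nonempty U] :
    letI := (functionFieldMap φ).hom.toAlgebra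
    ∃ f : Γ(V, U), f ≠ 0 ∧ ∀ y : PrimeSpectrum Γ(V, U), f ∉ y.asIdeal →
      IsAlgClosed y.asIdeal.ResidueField →
      Nat.card (PrimeSpectrum.comap (φ.app U).hom ⁻¹' {y}) =
        Field.finSepDegree V.functionField V'.functionField := by
  let := (functionFieldMap φ).hom.toAlgebra
  let := (φ.app U).hom.toAlgebra
  let : Algebra Γ(V, U) V'.functionField :=
    (V.germToFunctionField U ≫ functionFieldMap φ).hom.toAlgebra
  have : Nonempty (φ ⁻¹ᵁ U) := by
    obtain ⟨x, hx⟩ := φ.denseRange.exists_mem_open U.isOpen (Set.nonempty_coe_sort.1 ‹_›)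
    exact ⟨⟨x, hx⟩⟩
  have := functionField_isFractionRing_of_isAffineOpen V U hU
  have := functionField_isFractionRing_of_isAffineOpen V' _ (hU.preimage φ)
  have : IsScalarTower Γ(V, U) V.functionField V'.functionField := .of_algebraMap_eq fun _ ↦ rfl
  have : IsScalarTower Γ(V, U) Γ(V', φ ⁻¹ᵁ U) V'.functionField :=
    .of_algebraMap_eq' (congrArg CommRingCat.Hom.hom
      (germToFunctionField_comp_functionFieldMap φ U))
  have : FaithfulSMul Γ(V, U) V'.functionField := .trans _ V.functionField _
  have : FaithfulSMul Γ(V, U) Γ(V', φ ⁻¹ᵁ U) := .tower_bot _ _ V'.functionField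
  have : Module.Finite Γ(V, U) Γ(V', φ ⁻¹ᵁ U) := φ.finite_app U hU
  obtain ⟨f, hf, hcard⟩ := exists_forall_card_algHom_eq_finSepDegree.{u} Γ(V, U) Γ(V', φ ⁻¹ᵁ U)
    V.functionField V'.functionField
  refine ⟨f, hf, fun y hfy _ ↦ ?_⟩
  refine (card_preimage_comap_eq_card_algHom Γ(V, U) Γ(V', φ ⁻¹ᵁ U) y).trans
    (hcard y.asIdeal.ResidueField ?_)
  rwa [Ne, Ideal.algebraMap_residueField_eq_zero]

theorem exists_dense_open_fiber_card_eq_sepDegree_general [IsIntegral V] [IsIntegral V']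
    (φ : V' ⟶ V) [IsFinite φ] [IsDominant φ] :
    letI := (functionFieldMap φ).hom.toAlgebra
    ∃ U₀ : V.Opens, (U₀ : Set V).Nonempty ∧
      ∀ x ∈ U₀, IsAlgClosed (V.residueField x) →
        (φ ⁻¹' {x}).Finite ∧
          (φ ⁻¹' {x}).ncard = Field.finSepDegree V.functionField V'.functionField := by
  let := (functionFieldMap φ).hom.toAlgebra
  obtain ⟨U, hU, hgU, -⟩ := exists_isAffineOpen_mem_and_subset
    (x := genericPoint V) (U := ⊤) trivial
  have : Nonempty U := ⟨⟨_, hgU⟩⟩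
  obtain ⟨f, hf, hcard⟩ := exists_forall_card_preimage_comap_eq_finSepDegree φ hU
  refine ⟨V.basicOpen f, ?_, fun x hx hxalg ↦ ?_⟩
  · rwa [← TopologicalSpace.Opens.ne_bot_iff_nonempty, Ne, basicOpen_eq_bot_iff]
  obtain ⟨y, rfl⟩ : x ∈ Set.range hU.fromSpec := hU.range_fromSpec ▸ V.basicOpen_le f hx
  have hfy : f ∉ y.asIdeal := by
    have : y ∈ hU.fromSpec ⁻¹ᵁ V.basicOpen f := hx
    rwa [hU.fromSpec_preimage_basicOpen] at this
  have hncard : (φ ⁻¹' {hU.fromSpec y}).ncard =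
      Field.finSepDegree V.functionField V'.functionField := by
    rw [preimage_fromSpec_singleton φ hU (hU.preimage φ),
      Set.ncard_image_of_injective _ (hU.preimage φ).fromSpec.injective, ← Nat.card_coe_set_eq]
    exact hcard y hfy (isAlgClosed_residueField_of_isAffineOpen hU y)
  exact ⟨φ.finite_preimage_singleton _, hncard⟩

end Scheme

/-- Let `k` be an algebraically closed field, let `V` and `V'` be integral
projective `k`-varieties (separated `k`-schemes of finite type) with `V` normal, and let
`φ : V' → V` be a finite surjective morphism.  If `d` is the separable degree of the induced
function field extension `k(V) ↪ k(V')`, then there is a nonempty (hence dense) Zariski-open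
subset `U₀` of `V` such that the fiber of `φ` over every closed point of `U₀` contains exactly
`d` points. -/
theorem exists_dense_open_fiber_card_eq_sepDegree
    {k : Type u} [Field k] [IsAlgClosed k]
    (V V' : Scheme.{u})
    (sV : V ⟶ Spec (CommRingCat.of k)) (sV' : V' ⟶ Spec (CommRingCat.of k))
    [IsIntegral V] [IsIntegral V']
    [IsSeparated sV] [LocallyOfFiniteType sV] [QuasiCompact sV]
    [IsSeparated sV'] [LocallyOfFiniteType sV'] [QuasiCompact sV']
    (hVproj : IsProjectiveOver V sV) (hV'proj : IsProjectiveOver V' sV')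
    (hVnormal : ∀ x : V, IsDomain (V.presheaf.stalk x) ∧
      IsIntegrallyClosed (V.presheaf.stalk x))
    (φ : V' ⟶ V) [IsFinite φ] [Surjective φ] (hφk : φ ≫ sV = sV') :
    -- the generic point of `V'` maps to the generic point of `V`, so that `φ` induces an
    -- extension of function fields `k(V) ↪ k(V')`
    have hgen : φ.base (genericPoint V') = genericPoint V := by
      refine ((genericPoint_spec V).eq ?_).symm
      rw [isGenericPoint_def]
      apply Set.eq_univ_of_univ_subset
      have h1 : φ.base '' closure {genericPoint V'} ⊆ closure (φ.base '' {genericPoint V'}) :=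
        image_closure_subset_closure_image (by fun_prop)
      rw [(genericPoint_spec V').def, Set.image_univ, Set.image_singleton] at h1
      exact (φ.surjective.range_eq ▸ h1 : Set.univ ⊆ _)
    letI : Algebra V.functionField V'.functionField :=
      ((eqToHom (by rw [hgen]) :
          V.functionField ⟶ V.presheaf.stalk (φ.base (genericPoint V'))) ≫
        φ.stalkMap (genericPoint V')).hom.toAlgebra
    ∃ U₀ : V.Opens, (U₀ : Set V).Nonempty ∧
      ∀ x ∈ U₀, IsClosed ({x} : Set V) →
        (φ.base ⁻¹' {x}).Finite ∧
          (φ.base ⁻¹' {x}).ncard = Field.finSepDegree V.functionField V'.functionField := by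
  intro _
  obtain ⟨U₀, hU₀, hfiber⟩ := exists_dense_open_fiber_card_eq_sepDegree_general φ
  exact ⟨U₀, hU₀, fun x hx hxc ↦ hfiber x hx (isAlgClosed_residueField_of_isClosed sV hxc)⟩
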